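/- arXiv:1502.01490 — 4 statements merged into one kernel-verified Lean document; each statement's English description precedes it below -/
import Mathlib

section
/- Let l ≥ 2 be an integer, q ∈ [0,1], and let B_1, …, B_l be independent Bernoulli(q) random variables. Let M be the number of indices i ∈ {1,…,l} such that B_i = 1 and either B_1 = … = B_{i−1} = 1 or B_{i+1} = … = B_l = 1 (i.e., the number of indices lying in the maximal initial run of 1's or in the maximal final run of 1's). Then for every integer m with 0 < m ≤ l−2, P(M = m) = (m+1) q^m (1−q)². -/
open MeasureTheory Filter
open scoped ENNReal

noncomputable section

/-- Bernoulli measure on `Bool` with success probability `q`. -/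
def berMeasure (q : ℝ) : Measure Bool :=
  ENNReal.ofReal (1 - q) • Measure.dirac false + ENNReal.ofReal q • Measure.dirac true

/-- The number of indices lying in the maximal initial run of `1`s or in the maximal
final run of `1`s of the word `ω : Fin l → Bool`. -/
def runCount (l : ℕ) (ω : Fin l → Bool) : ℕ :=
  {i : Fin l | ω i = true ∧
    ((∀ j, j < i → ω j = true) ∨ (∀ j, i < j → ω j = true))}.ncard

lemma card_low (l a : ℕ) (h : a ≤ l) :
    ((Finset.range l).filter (fun i => i < a)).card = a := by
  have : (Finset.range l).filter (fun i => i < a) = Finset.range a := by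
    ext i; simp; omega
  rw [this, Finset.card_range]

lemma card_high (l c : ℕ) :
    ((Finset.range l).filter (fun i => c < i)).card = l - (c + 1) := by
  have : (Finset.range l).filter (fun i => c < i) = Finset.Ico (c + 1) l := by
    ext i; simp; omega
  rw [this, Nat.card_Ico]

lemma runCount_val (l : ℕ) (ω : Fin l → Bool) (a c : Fin l) (hac : a ≤ c)
    (ha : ω a = false) (hc : ω c = false) (h1 : ∀ i, i < a → ω i = true)
    (h2 : ∀ i, c < i → ω i = true) : runCount l ω = a + (l - (c + 1)) := by
  have hs : {i : Fin l | ω i = true ∧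
    ((∀ j, j < i → ω j = true) ∨ (∀ j, i < j → ω j = true))}
      = ((Finset.Iio a ∪ Finset.Ioi c : Finset (Fin l)) : Set (Fin l)) := by
    ext i
    simp only [Set.mem_ofPred_eq, Finset.coe_union, Finset.coe_Iio, Finset.coe_Ioi,
      Set.mem_union, Set.mem_Iio, Set.mem_Ioi]
    constructor
    · rintro ⟨hi, h | h⟩
      · left
        by_contra hh
        rcases lt_or_eq_of_le (not_lt.mp hh) with h' | h'
        · simp [h a h'] at ha
        · subst h'; simp [hi] at ha
      · right
        by_contra hh
        rcases lt_or_eq_of_le (not_lt.mp hh) with h' | h'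
        · simp [h c h'] at hc
        · subst h'; simp [hi] at hc
    · rintro (h | h)
      · exact ⟨h1 i h, Or.inl fun j hj => h1 j (hj.trans h)⟩
      · exact ⟨h2 i h, Or.inr fun j hj => h2 j (h.trans hj)⟩
  unfold runCount
  rw [hs, Set.ncard_coe_finset, Finset.card_union_of_disjoint]
  · simp; omega
  · rw [Finset.disjoint_left]
    intro i hi hi'
    simp only [Finset.mem_Iio, Finset.mem_Ioi] at hi hi'
    exact absurd (hi.trans_le hac) (not_lt.mpr hi'.le)

/-- Allowed values at site `i` for words with first zero at `a` and last zero at `c`. -/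
def siteSet (a c i : ℕ) : Set Bool :=
  {b | (i < a → b = true) ∧ (c < i → b = true) ∧ (i = a → b = false) ∧ (i = c → b = false)}

open Classical in
lemma ber_site (q : ℝ) (hq : q ∈ Set.Icc (0 : ℝ) 1) (a c i : ℕ) (hac : a < c) :
    berMeasure q (siteSet a c i) =
      (if i < a then ENNReal.ofReal q else 1) * (if c < i then ENNReal.ofReal q else 1) *
      (if i = a then ENNReal.ofReal (1 - q) else 1) *
      (if i = c then ENNReal.ofReal (1 - q) else 1) := by
  have key : ENNReal.ofReal (1 - q) + ENNReal.ofReal q = 1 := by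
    rw [← ENNReal.ofReal_add (by linarith [hq.2]) hq.1]; simp
  have e : berMeasure q (siteSet a c i) =
      (if false ∈ siteSet a c i then ENNReal.ofReal (1 - q) else 0) +
      (if true ∈ siteSet a c i then ENNReal.ofReal q else 0) := by
    simp [berMeasure, Set.indicator_apply]
  rw [e]
  have hf : false ∈ siteSet a c i ↔ ¬ i < a ∧ ¬ c < i := by simp [siteSet]
  have ht : true ∈ siteSet a c i ↔ i ≠ a ∧ i ≠ c := by simp [siteSet]
  simp only [hf, ht]
  rcases lt_trichotomy i a with h | h | h
  · have : ¬ c < i := by omega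
    have : i ≠ a := by omega
    have : i ≠ c := by omega
    simp [*]
  · have : ¬ c < i := by omega
    have : ¬ i < a := by omega
    have : i ≠ c := by omega
    subst h
    simp [*]
  · have h0 : ¬ i < a := by omega
    have h0' : i ≠ a := by omega
    rcases lt_trichotomy i c with h' | h' | h'
    · have : ¬ c < i := by omega
      have : i ≠ c := by omega
      simp [*]
    · subst h'; simp [*]
    · have : i ≠ c := by omega
      simp [*]

instance berFinite (q : ℝ) : IsFiniteMeasure (berMeasure q) := by
  constructor
  simp [berMeasure]

lemma cyl_prob (l : ℕ) (q : ℝ) (hq : q ∈ Set.Icc (0 : ℝ) 1) (a c : ℕ) (hac : a < c)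
    (hc : c < l) :
    (Measure.pi fun _ : Fin l => berMeasure q) (Set.univ.pi fun i : Fin l => siteSet a c i)
      = ENNReal.ofReal (q ^ (a + (l - (c + 1))) * (1 - q) ^ 2) := by
  have hq0 : 0 ≤ q := hq.1
  have hq1 : 0 ≤ 1 - q := by linarith [hq.2]
  rw [Measure.pi_pi]
  simp_rw [ber_site q hq a c _ hac]
  rw [Fin.prod_univ_eq_prod_range (fun i : ℕ =>
      (if i < a then ENNReal.ofReal q else 1) * (if c < i then ENNReal.ofReal q else 1) *
      (if i = a then ENNReal.ofReal (1 - q) else 1) *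
      (if i = c then ENNReal.ofReal (1 - q) else 1)) l]
  simp only [Finset.prod_mul_distrib]
  rw [Finset.prod_ite_eq', Finset.prod_ite_eq', if_pos (by simp; omega), if_pos (by simp; omega)]
  rw [Finset.prod_ite, Finset.prod_ite]
  simp only [Finset.prod_const, one_pow, mul_one]
  rw [card_low l a (by omega), card_high, ENNReal.ofReal_mul (by positivity),
    ENNReal.ofReal_pow hq0, ENNReal.ofReal_pow hq1]
  ring

lemma event_eq (l : ℕ) (hl : 2 ≤ l) (m : ℕ) (hm : m ≤ l - 2) :
    {ω : Fin l → Bool | runCount l ω = m} =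
      ⋃ a ∈ Finset.range (m + 1),
        Set.univ.pi fun i : Fin l => siteSet a (l - 1 - m + a) i := by
  ext ω
  simp only [Set.mem_ofPred_eq, Set.mem_iUnion, Finset.mem_range, Set.mem_univ_pi, exists_prop]
  constructor
  · intro h
    have hne : (Finset.univ.filter (fun i => ω i = false)).Nonempty := by
      by_contra hh
      rw [Finset.not_nonempty_iff_eq_empty, Finset.filter_eq_empty_iff] at hh
      have hall : ∀ i, ω i = true := fun i => by simpa using hh (Finset.mem_univ i)
      have : runCount l ω = l := by simp [runCount, hall]
      omega
    obtain ⟨a, ha, hamin⟩ := Finset.exists_min_image _ id hne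
    obtain ⟨c, hc, hcmax⟩ := Finset.exists_max_image _ id hne
    simp only [Finset.mem_filter, Finset.mem_univ, true_and, id] at ha hc hamin hcmax
    have h1 : ∀ i, i < a → ω i = true := by
      intro i hi
      by_contra hh
      exact absurd (hamin i (by simpa using hh)) (not_le.mpr hi)
    have h2 : ∀ i, c < i → ω i = true := by
      intro i hi
      by_contra hh
      exact absurd (hcmax i (by simpa using hh)) (not_le.mpr hi)
    have hv := runCount_val l ω a c (hamin c hc) ha hc h1 h2
    have hac : (a : ℕ) ≤ c := hamin c hc
    have := c.2
    refine ⟨a, by omega, fun i => ⟨fun hi => h1 i hi, fun hi => h2 i ?_, fun hi => ?_, fun hi => ?_⟩⟩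
    · rw [Fin.lt_def]; omega
    · rw [Fin.ext hi]; exact ha
    · rw [show i = c from Fin.ext (by omega)]; exact hc
  · rintro ⟨a, ham, h⟩
    have := runCount_val l ω ⟨a, by omega⟩ ⟨l - 1 - m + a, by omega⟩
      (by rw [Fin.le_def]; simp) ((h _).2.2.1 rfl) ((h _).2.2.2 rfl)
      (fun i hi => (h i).1 hi) (fun i hi => (h i).2.1 hi)
    rw [this]
    simp only
    omega

/-- for `B_1, …, B_l` i.i.d. Bernoulli(q) with `l ≥ 2`, the number `M`
of indices in the maximal initial or final run of `1`s satisfies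
`P(M = m) = (m+1) q^m (1-q)²` for every `0 < m ≤ l-2`. -/
theorem runCount_eq_prob (l : ℕ) (hl : 2 ≤ l) (q : ℝ) (hq : q ∈ Set.Icc (0 : ℝ) 1)
    (m : ℕ) (hm0 : 0 < m) (hm : m ≤ l - 2) :
    (Measure.pi fun _ : Fin l => berMeasure q) {ω : Fin l → Bool | runCount l ω = m}
      = ENNReal.ofReal ((m + 1) * q ^ m * (1 - q) ^ 2) := by
  have hq0 : 0 ≤ q := hq.1
  rw [event_eq l hl m hm, measure_biUnion_finset]
  · rw [Finset.sum_congr rfl (g := fun _ => ENNReal.ofReal (q ^ m * (1 - q) ^ 2))]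
    · rw [Finset.sum_const, Finset.card_range, nsmul_eq_mul, mul_assoc,
        ENNReal.ofReal_mul (p := (m : ℝ) + 1) (by positivity)]
      congr 1
      rw [← ENNReal.ofReal_natCast]
      push_cast
      rfl
    · intro a ha
      rw [Finset.mem_range] at ha
      rw [cyl_prob l q hq a _ (by omega) (by omega)]
      congr 3
      omega
  · have aux : ∀ a b : ℕ, a < b → b ≤ m → Disjoint
        (Set.univ.pi fun i : Fin l => siteSet a (l - 1 - m + a) i)
        (Set.univ.pi fun i : Fin l => siteSet b (l - 1 - m + b) i) := by
      intro a b hab hb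
      rw [Set.disjoint_left]
      intro ω h1 h2
      rw [Set.mem_univ_pi] at h1 h2
      have e1 := (h1 ⟨a, by omega⟩).2.2.1 rfl
      have e2 := (h2 ⟨a, by omega⟩).1 hab
      simp [e1] at e2
    intro a ha b hb hab
    simp only [Finset.coe_range, Set.mem_Iio] at ha hb
    rcases lt_or_gt_of_ne hab with h | h
    · exact aux a b h (by omega)
    · exact (aux b a h (by omega)).symm
  · intro a _
    exact (Set.toFinite _).measurableSet
end
end

section
/- Let c > 0 and t₁ > 0 be real numbers with c t₁ < 1, and define recursively t_{k+1} = c · t_k · Σ_{l=1}^{k} t_l for k ≥ 1. Then for every α with 0 < α < 1 satisfying (1−α)α > c t₁, one has t_k ≤ α^{k−1} t₁ for all k ≥ 1, and consequently Σ_{l=1}^{∞} t_l ≤ t₁/(1−α). -/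
open Filter

/-- Lemma 4.3: if `t_{k+1} = c t_k Σ_{l=1}^k t_l` with `c t₁ < 1`,
then for every `0 < α < 1` with `(1-α) α > c t₁` one has `t_k ≤ α^{k-1} t₁` for all
`k ≥ 1`, and hence `Σ_{l=1}^∞ t_l ≤ t₁/(1-α)`. -/
theorem geometric_bound_recursive_sequence
    (c t₁ : ℝ) (hc : 0 < c) (ht₁ : 0 < t₁) (hct : c * t₁ < 1)
    (t : ℕ → ℝ) (ht1 : t 1 = t₁)
    (hrec : ∀ k ≥ 1, t (k + 1) = c * t k * ∑ l ∈ Finset.Icc 1 k, t l)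
    (α : ℝ) (hα0 : 0 < α) (hα1 : α < 1) (hα : c * t₁ < (1 - α) * α) :
    (∀ k ≥ 1, t k ≤ α ^ (k - 1) * t₁) ∧ (∑' l : ℕ, t (l + 1) ≤ t₁ / (1 - α)) := by
  have h1α : 0 < 1 - α := by linarith
  have key : ∀ n : ℕ, 0 < t (n + 1) ∧ t (n + 1) ≤ α ^ n * t₁ ∧
      0 < ∑ l ∈ Finset.Icc 1 (n + 1), t l ∧
      (∑ l ∈ Finset.Icc 1 (n + 1), t l) * (1 - α) ≤ t₁ * (1 - α ^ (n + 1)) := by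
    intro n
    induction n with
    | zero => simp [ht1, ht₁]
    | succ n ih =>
      obtain ⟨h1, h2, h3, h4⟩ := ih
      have hr := hrec (n + 1) (by omega)
      have hs : ∑ l ∈ Finset.Icc 1 (n + 1 + 1), t l
          = ∑ l ∈ Finset.Icc 1 (n + 1), t l + t (n + 1 + 1) :=
        Finset.sum_Icc_succ_top (by omega) _
      rw [hs]
      generalize (∑ l ∈ Finset.Icc 1 (n + 1), t l) = S at *
      have hpow : 0 < α ^ (n + 1) := by positivity
      have hS : S * (1 - α) ≤ t₁ := by nlinarith
      have hcS : c * S ≤ α := by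
        have : c * (S * (1 - α)) ≤ c * t₁ := mul_le_mul_of_nonneg_left hS hc.le
        refine le_of_mul_le_mul_right (a := 1 - α) ?_ h1α
        linarith
      have hpos : 0 < t (n + 1 + 1) := by rw [hr]; positivity
      have hle : t (n + 1 + 1) ≤ α ^ (n + 1) * t₁ := by
        calc t (n + 1 + 1) = (c * S) * t (n + 1) := by rw [hr]; ring
          _ ≤ α * (α ^ n * t₁) := mul_le_mul hcS h2 h1.le hα0.le
          _ = α ^ (n + 1) * t₁ := by ring
      refine ⟨hpos, hle, by linarith, ?_⟩
      have := mul_le_mul_of_nonneg_right hle h1α.le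
      have e : α ^ (n + 1 + 1) = α ^ (n + 1) * α := pow_succ _ _
      rw [e]
      nlinarith
  constructor
  · intro k hk
    obtain ⟨n, rfl⟩ : ∃ n, k = n + 1 := ⟨k - 1, by omega⟩
    simpa using (key n).2.1
  · have hg : HasSum (fun n : ℕ => α ^ n * t₁) ((1 - α)⁻¹ * t₁) :=
      (hasSum_geometric_of_lt_one hα0.le hα1).mul_right t₁
    have hsum : Summable (fun n : ℕ => t (n + 1)) :=
      Summable.of_nonneg_of_le (fun n => (key n).1.le) (fun n => (key n).2.1) hg.summable
    have := hasSum_le (fun n => (key n).2.1) hsum.hasSum hg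
    rw [div_eq_inv_mul]
    exact this
end

section
/- Let (t_n) be a sequence of positive integers with t_n → ∞ and let (p_n) be a sequence in (0,1) with t_n p_n → 0. Then P(Bin(t_n, p_n) ≥ 2) = (t_n p_n)²/2 − ( t_n p_n²/2 + (t_n p_n)³/3 )(1 + o(1)) as n → ∞; that is, ( P(Bin(t_n,p_n) ≥ 2) − (t_n p_n)²/2 ) / ( t_n p_n²/2 + (t_n p_n)³/3 ) → −1. -/
open Filter

theorem aux_pow (p : ℝ) (h0 : 0 < p) (h1 : p < 1) (s : ℕ) :
    1 - s * p ≤ (1 - p) ^ s ∧ (1 - p) ^ s ≤ 1 - s * p + s * (s - 1) / 2 * p ^ 2 := by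
  induction s with
  | zero => simp
  | succ s ih =>
    obtain ⟨ha, hb⟩ := ih
    have hs : (0 : ℝ) ≤ s := Nat.cast_nonneg s
    have hq : 0 ≤ 1 - p := by linarith
    have h3 : 0 ≤ (s : ℝ) * (s - 1) := by
      rcases Nat.eq_zero_or_pos s with h | h
      · simp [h]
      · have : (1 : ℝ) ≤ s := by exact_mod_cast h
        exact mul_nonneg hs (by linarith)
    have e1 := mul_le_mul_of_nonneg_right ha hq
    have e2 := mul_le_mul_of_nonneg_right hb hq
    have e3 : 0 ≤ (s : ℝ) * p ^ 2 := by positivity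
    have e4 : 0 ≤ (s : ℝ) * (s - 1) * p ^ 3 := by positivity
    rw [pow_succ]
    push_cast
    constructor <;> nlinarith

theorem aux_f (p : ℝ) (h0 : 0 < p) (h1 : p < 1) (s : ℕ) :
    ((s : ℝ) + 1) * s / 2 * p ^ 2 - ((s : ℝ) + 1) * s * (s - 1) / 3 * p ^ 3
      ≤ 1 - (1 - p) ^ (s + 1) - ((s : ℝ) + 1) * p * (1 - p) ^ s ∧
    1 - (1 - p) ^ (s + 1) - ((s : ℝ) + 1) * p * (1 - p) ^ s ≤
    ((s : ℝ) + 1) * s / 2 * p ^ 2 - ((s : ℝ) + 1) * s * (s - 1) / 3 * p ^ 3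
      + ((s : ℝ) + 1) * s * (s - 1) * (s - 2) / 8 * p ^ 4 := by
  induction s with
  | zero => simp
  | succ s ih =>
    obtain ⟨ha, hb⟩ := ih
    obtain ⟨hc, hd⟩ := aux_pow p h0 h1 s
    have hk : 0 ≤ ((s : ℝ) + 1) * p ^ 2 := by positivity
    have e1 := mul_le_mul_of_nonneg_left hc hk
    have e2 := mul_le_mul_of_nonneg_left hd hk
    have e : 1 - (1 - p) ^ (s + 1 + 1) - (((s + 1 : ℕ) : ℝ) + 1) * p * (1 - p) ^ (s + 1)
        = (1 - (1 - p) ^ (s + 1) - ((s : ℝ) + 1) * p * (1 - p) ^ s)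
          + ((s : ℝ) + 1) * p ^ 2 * (1 - p) ^ s := by
      push_cast
      ring
    rw [e]
    push_cast
    constructor
    · refine le_trans (le_of_eq ?_) (add_le_add ha e1)
      ring
    · refine le_trans (add_le_add hb e2) (le_of_eq ?_)
      ring

theorem aux_ratio (p : ℝ) (h0 : 0 < p) (h1 : p < 1) (t : ℕ) (ht : 1 ≤ t) :
    |((1 - (1 - p) ^ t - (t : ℝ) * p * (1 - p) ^ (t - 1)) - ((t : ℝ) * p) ^ 2 / 2) /
          ((t : ℝ) * p ^ 2 / 2 + ((t : ℝ) * p) ^ 3 / 3) - (-1)| ≤ 3 * ((t : ℝ) * p) := by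
  obtain ⟨s, rfl⟩ : ∃ s, t = s + 1 := ⟨t - 1, by omega⟩
  obtain ⟨ha, hb⟩ := aux_f p h0 h1 s
  have hs : (0 : ℝ) ≤ s := Nat.cast_nonneg s
  rw [Nat.add_sub_cancel]
  push_cast
  generalize 1 - (1 - p) ^ (s + 1) - ((s : ℝ) + 1) * p * (1 - p) ^ s = F at *
  generalize (s : ℝ) = u at *
  have hD : 0 < (u + 1) * p ^ 2 / 2 + ((u + 1) * p) ^ 3 / 3 := by positivity
  rw [sub_neg_eq_add, div_add_one hD.ne', abs_div, abs_of_pos hD, div_le_iff₀ hD, abs_le]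
  have k1 : 0 ≤ p ^ 3 * ((u + 1) * (u + 1 / 3)) := by positivity
  have k2 : 0 ≤ p ^ 3 * (u + 1) := by positivity
  have k3 : 0 ≤ p ^ 4 * ((u + 1) * (6 * (u + 1 - 11 / 12) ^ 2 + 23 / 24)) := by positivity
  have k4 : 0 ≤ p ^ 4 * (u + 1) ^ 4 := by positivity
  have k5 : 0 ≤ p ^ 3 * (u + 1) ^ 2 := by positivity
  constructor <;> nlinarith

/-- expansion (4.24): if `t_n → ∞` and `t_n p_n → 0`, then
`P(Bin(t_n, p_n) ≥ 2) = (t_n p_n)²/2 - (t_n p_n²/2 + (t_n p_n)³/3)(1 + o(1))`,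
where `P(Bin(t,p) ≥ 2) = 1 - (1-p)^t - tp(1-p)^{t-1}`. -/
theorem binomial_ge_two_expansion
    (t : ℕ → ℕ) (p : ℕ → ℝ) (hp : ∀ n, p n ∈ Set.Ioo (0 : ℝ) 1)
    (ht : Tendsto t atTop atTop)
    (htp : Tendsto (fun n : ℕ => (t n : ℝ) * p n) atTop (nhds 0)) :
    Tendsto (fun n : ℕ =>
        ((1 - (1 - p n) ^ t n - (t n : ℝ) * p n * (1 - p n) ^ (t n - 1)) -
            ((t n : ℝ) * p n) ^ 2 / 2) /
          ((t n : ℝ) * p n ^ 2 / 2 + ((t n : ℝ) * p n) ^ 3 / 3))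
      atTop (nhds (-1)) := by
  have hz : Tendsto (fun n : ℕ => 3 * ((t n : ℝ) * p n)) atTop (nhds 0) := by
    simpa using htp.const_mul 3
  rw [tendsto_iff_norm_sub_tendsto_zero]
  refine squeeze_zero' (Eventually.of_forall fun n => norm_nonneg _) ?_ hz
  filter_upwards [ht.eventually_ge_atTop 1] with n hn
  rw [Real.norm_eq_abs]
  exact aux_ratio (p n) (hp n).1 (hp n).2 (t n) hn
end

section
/- Let (p_n) be a sequence in (0,1) with n p_n → ∞ and (2 p_n n)/(log n + log(p_n n)) → ∞, let C > 0 be a constant, and let (K_n) be integers with 0 ≤ n − K_n ≤ C p_n n² e^{−p_n n} for all large n. Then (n − K_n)(1 − p_n)^{K_n} → 0 as n → ∞. -/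
open Filter

/-- the estimate (4.37): if `np → ∞`,
`2pn/(log n + log(pn)) → ∞`, `C > 0` and `0 ≤ n - K_n ≤ C p n² e^{-pn}` for all
large `n`, then `(n - K_n)(1 - p)^{K_n} → 0`. -/
theorem remaining_vertices_to_zero
    (p : ℕ → ℝ) (hp : ∀ n, p n ∈ Set.Ioo (0 : ℝ) 1)
    (h1 : Tendsto (fun n : ℕ => (n : ℝ) * p n) atTop atTop)
    (h2 : Tendsto (fun n : ℕ =>
        2 * p n * (n : ℝ) / (Real.log n + Real.log (p n * n))) atTop atTop)
    (C : ℝ) (hC : 0 < C) (K : ℕ → ℕ)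
    (hK : ∀ᶠ n : ℕ in atTop, K n ≤ n ∧
        (n : ℝ) - (K n : ℝ) ≤ C * p n * (n : ℝ) ^ 2 * Real.exp (-(p n * n))) :
    Tendsto (fun n : ℕ => ((n : ℝ) - (K n : ℝ)) * (1 - p n) ^ K n)
      atTop (nhds 0) := by
  have h1' : Tendsto (fun n : ℕ => p n * (n : ℝ)) atTop atTop := by
    simpa only [mul_comm] using h1
  have hlim : Tendsto (fun n : ℕ => C * Real.exp (-(p n * n / 2))) atTop (nhds 0) := by
    have h3 : Tendsto (fun n : ℕ => p n * (n : ℝ) / 2) atTop atTop :=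
      h1'.atTop_div_const (by norm_num)
    simpa using (Real.tendsto_exp_neg_atTop_nhds_zero.comp h3).const_mul C
  refine tendsto_of_tendsto_of_tendsto_of_le_of_le' tendsto_const_nhds hlim ?_ ?_
  · filter_upwards [hK] with n hn
    have hc : (K n : ℝ) ≤ n := by exact_mod_cast hn.1
    exact mul_nonneg (by linarith) (pow_nonneg (by linarith [(hp n).2]) _)
  · filter_upwards [hK, h1'.eventually_gt_atTop 1, h2.eventually_ge_atTop 4,
      eventually_gt_atTop 1] with n hn hx hM hn1
    have hc : (K n : ℝ) ≤ n := by exact_mod_cast hn.1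
    have hnR : (1 : ℝ) < n := by exact_mod_cast hn1
    have hpow : (1 - p n) ^ K n ≤ 1 :=
      pow_le_one₀ (by linarith [(hp n).2]) (by linarith [(hp n).1])
    have hl1 := Real.log_pos hnR
    have hl2 := Real.log_pos hx
    rw [le_div_iff₀ (by linarith)] at hM
    have hL : (n : ℝ) * (p n * n) ≤ Real.exp (p n * n / 2) := by
      rw [← Real.log_le_iff_le_exp (by positivity),
        Real.log_mul (by positivity) (by positivity)]
      linarith
    calc ((n : ℝ) - K n) * (1 - p n) ^ K n ≤ ((n : ℝ) - K n) * 1 :=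
          mul_le_mul_of_nonneg_left hpow (by linarith)
      _ ≤ C * p n * (n : ℝ) ^ 2 * Real.exp (-(p n * n)) := by linarith [hn.2]
      _ = C * (((n : ℝ) * (p n * n)) * Real.exp (-(p n * n))) := by ring
      _ ≤ C * (Real.exp (p n * n / 2) * Real.exp (-(p n * n))) := by gcongr
      _ = C * Real.exp (-(p n * n / 2)) := by
          rw [← Real.exp_add]; congr 2; ring
end
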